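/- Let (N, 𝔖) be a regular set system with |N| = n ≥ 1, let v, u be capacities on 𝔖 with v ≢ u such that for every maximal chain C ∈ 𝒞(𝔖) and every i, p^{u,C}_i > 0, and for 0 < λ < 1 define v^u_λ := λu + (1 − λ)v. Then λ ↦ H(v^u_λ; u) is strictly decreasing on (0, 1). -/

import Mathlib

open Finset

variable {α : Type*} [DecidableEq α] [Fintype α]

/-- `c = (c 0, …, c m)` is a maximal chain of the set system `S`:
`∅ = c 0 ⊊ c 1 ⊊ ⋯ ⊊ c m = N`, each `c i ∈ S`, and no element of `S` lies strictly
between consecutive elements. Its length is `m`. -/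
def IsMaxChainOf (S : Finset (Finset α)) (m : ℕ) (c : Fin (m + 1) → Finset α) : Prop :=
  c 0 = ∅ ∧ c (Fin.last m) = Finset.univ ∧ (∀ i, c i ∈ S) ∧
    (∀ i : Fin m, c i.castSucc ⊂ c i.succ) ∧
    (∀ i : Fin m, ∀ x ∈ S, ¬(c i.castSucc ⊂ x ∧ x ⊂ c i.succ))

/-- `(N, S)` is a regular set system: `∅, N ∈ S` and every maximal chain has length `|N|`. -/
def IsRegularSetSystem (S : Finset (Finset α)) : Prop :=
  ∅ ∈ S ∧ Finset.univ ∈ S ∧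
    ∀ (m : ℕ) (c : Fin (m + 1) → Finset α), IsMaxChainOf S m c → m = Fintype.card α

/-- A capacity on the set system `S`: a `[0,1]`-valued, monotone set function
with `v ∅ = 0` and `v N = 1`. -/
def IsCapacity (S : Finset (Finset α)) (v : Finset α → ℝ) : Prop :=
  v ∅ = 0 ∧ v Finset.univ = 1 ∧ (∀ A ∈ S, 0 ≤ v A ∧ v A ≤ 1) ∧
    ∀ A ∈ S, ∀ B ∈ S, A ⊆ B → v A ≤ v B

/-- `h(x) = -x log₂ x` (with the convention `0 log 0 = 0`, satisfied by `Real.logb`). -/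
noncomputable def hfun (x : ℝ) : ℝ := -(x * Real.logb 2 x)

/-- Shannon entropy of a probability distribution. -/
noncomputable def shannonEntropy {m : ℕ} (p : Fin m → ℝ) : ℝ := ∑ i, hfun (p i)

/-- The increment distribution `p^{v,C}` along a chain `c`. -/
def chainDist (v : Finset α → ℝ) {m : ℕ} (c : Fin (m + 1) → Finset α) : Fin m → ℝ :=
  fun i => v (c i.succ) - v (c i.castSucc)

/-- The maximal chains of `S` (of length `|N|`; in a regular set system these are
all the maximal chains). -/
noncomputable def maxChains (S : Finset (Finset α)) :
    Finset (Fin (Fintype.card α + 1) → Finset α) :=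
  @Finset.filter _ (fun c => IsMaxChainOf S (Fintype.card α) c) (Classical.decPred _)
    Finset.univ

/-- The entropy `H(v)` of a capacity `v` on a regular set system. -/
noncomputable def capEntropy (S : Finset (Finset α)) (v : Finset α → ℝ) : ℝ :=
  (1 / ((maxChains S).card : ℝ)) * ∑ c ∈ maxChains S, shannonEntropy (chainDist v c)

/-- Shannon relative entropy `H_S(p; q) = Σ p_i log₂ (p_i/q_i)`. -/
noncomputable def relEntropyFun {m : ℕ} (p q : Fin m → ℝ) : ℝ :=
  ∑ i, p i * Real.logb 2 (p i / q i)

/-- The relative entropy `H(v; u)` of capacities on a regular set system. -/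
noncomputable def capRelEntropy (S : Finset (Finset α)) (v u : Finset α → ℝ) : ℝ :=
  (1 / ((maxChains S).card : ℝ)) *
    ∑ c ∈ maxChains S, relEntropyFun (chainDist v c) (chainDist u c)


/-- A path of covering steps inside `S`, of length `m`, starting from `∅`. -/
def CoverPath (S : Finset (Finset α)) (m : ℕ) (c : ℕ → Finset α) : Prop :=
  c 0 = ∅ ∧ (∀ i ≤ m, c i ∈ S) ∧ (∀ i < m, c i ⊂ c (i + 1)) ∧
    (∀ i < m, ∀ x ∈ S, ¬(c i ⊂ x ∧ x ⊂ c (i + 1)))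

lemma CoverPath.extend {S : Finset (Finset α)} {Y : Finset α} (hY : Y ∈ S) :
    ∀ (k m : ℕ) (c : ℕ → Finset α), CoverPath S m c → c m ⊆ Y → (Y \ c m).card ≤ k →
      ∃ m' c', m ≤ m' ∧ CoverPath S m' c' ∧ c' m' = Y ∧ ∀ i ≤ m, c' i = c i := by
  intro k
  induction k with
  | zero =>
    intro m c hc hsub hcard
    have h0 : Y \ c m = ∅ := Finset.card_eq_zero.mp (Nat.le_zero.mp hcard)
    exact ⟨m, c, le_rfl, hc, hsub.antisymm (Finset.sdiff_eq_empty_iff_subset.mp h0),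
      fun _ _ => rfl⟩
  | succ k ih =>
    intro m c hc hsub hcard
    by_cases heq : c m = Y
    · exact ⟨m, c, le_rfl, hc, heq, fun _ _ => rfl⟩
    have hss : c m ⊂ Y := lt_of_le_of_ne hsub heq
    obtain ⟨Z, hZ, hmin⟩ := Finset.exists_min_image
      (S.filter (fun Z => c m ⊂ Z ∧ Z ⊆ Y)) Finset.card
      ⟨Y, by simp [hY, hss]⟩
    simp only [Finset.mem_filter] at hZ hmin
    obtain ⟨hZS, hcZ, hZY⟩ := hZ
    obtain ⟨h0, h1, h2, h3⟩ := hc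
    have hold : ∀ i ≤ m, Function.update c (m + 1) Z i = c i := by
      intro i hi
      rw [Function.update_of_ne (by omega)]
    have hnew : Function.update c (m + 1) Z (m + 1) = Z := by simp
    obtain ⟨m', c', hm', hc', hlast, hagree⟩ := ih (m + 1) (Function.update c (m + 1) Z) (by
      refine ⟨by rw [hold 0 (Nat.zero_le _), h0], ?_, ?_, ?_⟩
      · intro i hi
        rcases Nat.lt_or_ge m i with h | h
        · obtain rfl : i = m + 1 := by omega
          rw [hnew]; exact hZS
        · rw [hold i h]; exact h1 i h
      · intro i hi
        rw [hold i (by omega)]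
        rcases Nat.lt_or_ge i m with h | h
        · rw [hold (i + 1) h]; exact h2 i h
        · obtain rfl : i = m := by omega
          rw [hnew]; exact hcZ
      · intro i hi x hx
        rw [hold i (by omega)]
        rcases Nat.lt_or_ge i m with h | h
        · rw [hold (i + 1) h]; exact h3 i h x hx
        · obtain rfl : i = m := by omega
          rw [hnew]
          rintro ⟨ha, hb⟩
          have := hmin x ⟨hx, ha, hb.subset.trans hZY⟩
          have := Finset.card_lt_card hb
          omega) (by rw [hnew]; exact hZY) (by
        rw [hnew]
        have h5 : (Y \ Z).card < (Y \ c m).card := by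
          rw [Finset.card_sdiff_of_subset hZY, Finset.card_sdiff_of_subset hsub]
          have := Finset.card_lt_card hcZ
          have := Finset.card_le_card hZY
          omega
        omega)
    exact ⟨m', c', by omega, hc', hlast, fun i hi => by rw [hagree i (by omega), hold i hi]⟩

lemma exists_maxChain_through {S : Finset (Finset α)} (hS : IsRegularSetSystem S)
    {A : Finset α} (hA : A ∈ S) : ∃ c ∈ maxChains S, ∃ k, c k = A := by
  obtain ⟨h0, h1, hreg⟩ := hS
  obtain ⟨m, c, -, hc, hcA, -⟩ := CoverPath.extend hA _ 0 (fun _ => ∅)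
    ⟨rfl, fun _ _ => h0, by simp, by simp⟩ (by simp) le_rfl
  obtain ⟨m', c', hm, hc', hlast, hag⟩ := CoverPath.extend h1 _ m c hc (by simp) le_rfl
  have hmax : IsMaxChainOf S m' (fun i => c' i.val) := by
    obtain ⟨a, b, d, e⟩ := hc'
    exact ⟨a, hlast, fun i => b _ (by omega), fun i => d _ i.2, fun i => e _ i.2⟩
  obtain rfl := hreg _ _ hmax
  refine ⟨fun i => c' i.val, ?_, ⟨m, by omega⟩, (hag m le_rfl).trans hcA⟩
  simpa [maxChains] using hmax

lemma sum_chainDist {S : Finset (Finset α)} {v : Finset α → ℝ} (hv : IsCapacity S v)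
    {c : Fin (Fintype.card α + 1) → Finset α} (hc : c ∈ maxChains S) :
    ∑ i, chainDist v c i = 1 := by
  have h : IsMaxChainOf S _ c := by simpa [maxChains] using hc
  have e : ∑ i, chainDist v c i = v (c (Fin.last _)) - v (c 0) := by
    have h1 := Fin.sum_univ_succ (fun i => v (c i))
    have h2 := Fin.sum_univ_castSucc (fun i => v (c i))
    simp only [chainDist, Finset.sum_sub_distrib]
    linarith
  rw [e, h.1, h.2.1, hv.1, hv.2.1, sub_zero]

lemma relEntropyFun_eq {m : ℕ} (p q : Fin m → ℝ) (hq : ∀ i, 0 < q i)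
    (hs : ∑ i, p i = ∑ i, q i) :
    relEntropyFun p q = (∑ i, q i * InformationTheory.klFun (p i / q i)) / Real.log 2 := by
  have h : ∑ i, q i * InformationTheory.klFun (p i / q i)
      = ∑ i, (p i * Real.log (p i / q i) + (q i - p i)) := by
    refine Finset.sum_congr rfl fun i _ => ?_
    have := (hq i).ne'
    rw [InformationTheory.klFun]
    generalize Real.log _ = L
    field_simp
    ring
  rw [h, Finset.sum_add_distrib, Finset.sum_sub_distrib, hs, sub_self, add_zero,
    Finset.sum_div, relEntropyFun]
  refine Finset.sum_congr rfl fun i _ => ?_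
  rw [Real.logb, mul_div_assoc]

lemma klFun_strict {x a b : ℝ} (hx : 0 ≤ x) (hx1 : x ≠ 1) (ha : 0 < a) (hab : a < b)
    (hb : b < 1) : InformationTheory.klFun (b + (1 - b) * x) <
      InformationTheory.klFun (a + (1 - a) * x) := by
  have ha1 : 0 < 1 - a := by linarith
  set y := a + (1 - a) * x with hy
  have hy0 : 0 ≤ y := by positivity
  have hy1 : y ≠ 1 := by
    intro h
    apply hx1
    have : (1 - a) * (x - 1) = 0 := by rw [hy] at h; linarith
    rcases mul_eq_zero.mp this with h | h <;> linarith
  have ht0 : 0 < (b - a) / (1 - a) := div_pos (by linarith) ha1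
  have ht1 : 0 < (1 - b) / (1 - a) := div_pos (by linarith) ha1
  have hsum : (b - a) / (1 - a) + (1 - b) / (1 - a) = 1 := by field_simp; ring
  have key := InformationTheory.strictConvexOn_klFun.2 (Set.mem_Ici.mpr zero_le_one)
    (Set.mem_Ici.mpr hy0) hy1.symm ht0 ht1 hsum
  have e : ((b - a) / (1 - a)) • (1 : ℝ) + ((1 - b) / (1 - a)) • y = b + (1 - b) * x := by
    simp only [smul_eq_mul, hy]; field_simp; ring
  rw [e, InformationTheory.klFun_one] at key
  simp only [smul_eq_mul, mul_zero, zero_add] at key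
  have h0 := InformationTheory.klFun_nonneg hy0
  nlinarith

/-- for capacities `v ≢ u` on a regular set system (with positive
increments of `u` along every maximal chain), the relative entropy of
`v^u_λ := λ u + (1 - λ) v` to `u` is strictly decreasing in `λ` on `(0, 1)`. -/
theorem capRelEntropy_strictAnti_toward_u (S : Finset (Finset α))
    (hS : IsRegularSetSystem S) (hn : 1 ≤ Fintype.card α)
    (v u : Finset α → ℝ) (hv : IsCapacity S v) (hu : IsCapacity S u)
    (hne : ∃ A ∈ S, v A ≠ u A)
    (hupos : ∀ c ∈ maxChains S, ∀ i : Fin (Fintype.card α), 0 < chainDist u c i)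
    (lam₁ lam₂ : ℝ) (h₁ : 0 < lam₁) (h₁₂ : lam₁ < lam₂) (h₂ : lam₂ < 1) :
    capRelEntropy S (fun A => lam₂ * u A + (1 - lam₂) * v A) u
      < capRelEntropy S (fun A => lam₁ * u A + (1 - lam₁) * v A) u := by
  have hlog : 0 < Real.log 2 := Real.log_pos (by norm_num)
  have hdist : ∀ (l : ℝ) (c : Fin (Fintype.card α + 1) → Finset α) i,
      chainDist (fun A => l * u A + (1 - l) * v A) c i
        = l * chainDist u c i + (1 - l) * chainDist v c i := by
    intro l c i; simp only [chainDist]; ring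
  have hform : ∀ (l : ℝ), ∀ c ∈ maxChains S,
      relEntropyFun (chainDist (fun A => l * u A + (1 - l) * v A) c) (chainDist u c)
        = (∑ i, chainDist u c i *
          InformationTheory.klFun (l + (1 - l) * (chainDist v c i / chainDist u c i)))
            / Real.log 2 := by
    intro l c hc
    rw [relEntropyFun_eq _ _ (hupos c hc)]
    · congr 1
      refine Finset.sum_congr rfl fun i _ => ?_
      have := (hupos c hc i).ne'
      rw [hdist]
      congr 2
      field_simp
    · simp only [hdist, Finset.sum_add_distrib, ← Finset.mul_sum]
      rw [sum_chainDist hu hc, sum_chainDist hv hc]; ring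
  have hvnn : ∀ c ∈ maxChains S, ∀ i, 0 ≤ chainDist v c i := by
    intro c hc i
    have h : IsMaxChainOf S _ c := by simpa [maxChains] using hc
    exact sub_nonneg.mpr (hv.2.2.2 _ (h.2.2.1 _) _ (h.2.2.1 _) (h.2.2.2.1 i).subset)
  have hlt : ∀ c ∈ maxChains S, ∀ i, chainDist v c i ≠ chainDist u c i →
      chainDist u c i *
          InformationTheory.klFun (lam₂ + (1 - lam₂) * (chainDist v c i / chainDist u c i))
        < chainDist u c i *
          InformationTheory.klFun (lam₁ + (1 - lam₁) * (chainDist v c i / chainDist u c i)) := by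
    intro c hc i hi
    have hq := hupos c hc i
    refine mul_lt_mul_of_pos_left (klFun_strict (div_nonneg (hvnn c hc i) hq.le) ?_ h₁ h₁₂ h₂) hq
    intro h
    exact hi ((div_eq_one_iff_eq hq.ne').mp h)
  have hle : ∀ c ∈ maxChains S, ∀ i,
      chainDist u c i *
          InformationTheory.klFun (lam₂ + (1 - lam₂) * (chainDist v c i / chainDist u c i))
        ≤ chainDist u c i *
          InformationTheory.klFun (lam₁ + (1 - lam₁) * (chainDist v c i / chainDist u c i)) := by
    intro c hc i
    by_cases hi : chainDist v c i = chainDist u c i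
    · rw [hi, div_self (hupos c hc i).ne']; simp
    · exact (hlt c hc i hi).le
  obtain ⟨A, hA, hAne⟩ := hne
  obtain ⟨c, hc, k, hk⟩ := exists_maxChain_through hS hA
  have hi : ∃ i, chainDist v c i ≠ chainDist u c i := by
    by_contra! hall
    have hcm : IsMaxChainOf S _ c := by simpa [maxChains] using hc
    have : ∀ j, v (c j) = u (c j) := by
      intro j
      induction j using Fin.induction with
      | zero => rw [hcm.1, hv.1, hu.1]
      | succ i ih =>
        have := hall i
        simp only [chainDist] at this
        linarith
    exact hAne (hk ▸ this k)
  obtain ⟨i, hi⟩ := hi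
  unfold capRelEntropy
  refine mul_lt_mul_of_pos_left ?_ ?_
  · rw [Finset.sum_congr rfl (hform lam₁), Finset.sum_congr rfl (hform lam₂)]
    refine Finset.sum_lt_sum (fun c hc => ?_) ⟨c, hc, ?_⟩
    · exact div_le_div_of_nonneg_right (Finset.sum_le_sum fun i _ => hle c hc i) hlog.le
    · exact div_lt_div_of_pos_right
        (Finset.sum_lt_sum (fun i _ => hle c hc i) ⟨i, Finset.mem_univ _, hlt c hc i hi⟩) hlog
  · have : 0 < (maxChains S).card := Finset.card_pos.mpr ⟨c, hc⟩
    positivity
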